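/- Let λ be a σ-finite measure and q₁,…,qₙ ∈ L²(λ), and fix an embedding dimension d_e ≥ 1. Define q̄ = (1/n) Σᵢ qᵢ and the centered covariance operator K g = Σᵢ ⟨qᵢ − q̄, g⟩ (qᵢ − q̄); a PCA embedding of q₁,…,qₙ is any family p₁,…,pₙ ∈ ℝ^{d_e} of the form pᵢ = (⟨qᵢ − q̄, φ₁⟩,…,⟨qᵢ − q̄, φ_{d_e}⟩) for a choice of orthonormal eigenfunctions φ₁,…,φ_{d_e} of K associated with its top d_e eigenvalues (counted with multiplicity, in decreasing order). Then there exists a constant C > 0, depending only on q₁,…,qₙ and d_e, such that for every q̂₁,…,q̂ₙ ∈ L²(λ) and every PCA embedding (p̂ᵢ) of q̂₁,…,q̂ₙ, there exists a PCA embedding (p̃ᵢ) of q₁,…,qₙ with Σᵢ ‖p̃ᵢ − p̂ᵢ‖² ≤ C · n · (Σᵢ ‖qᵢ − q̂ᵢ‖²) · (1 + Σᵢ ‖qᵢ − q̂ᵢ‖²). -/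

import Mathlib

open MeasureTheory Filter
open scoped ENNReal RealInnerProductSpace BigOperators

noncomputable section

namespace Stmt1

variable {α : Type*} [MeasurableSpace α]

/-- The mean of the functions `q i`. -/
def qbar {μ : Measure α} {n : ℕ} (q : Fin n → Lp ℝ 2 μ) : Lp ℝ 2 μ :=
  (n : ℝ)⁻¹ • ∑ i, q i

/-- The centered covariance operator `K g = Σᵢ ⟨qᵢ − q̄, g⟩ (qᵢ − q̄)`. -/
def covOp {μ : Measure α} {n : ℕ} (q : Fin n → Lp ℝ 2 μ) (g : Lp ℝ 2 μ) : Lp ℝ 2 μ :=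
  ∑ i, ⟪q i - qbar q, g⟫ • (q i - qbar q)

/-- `p` is a PCA embedding of `q₁, …, qₙ` in dimension `de`: there is an orthonormal family
`ψ₁, …, ψ_{de}` of eigenfunctions of the centered covariance operator, with eigenvalues
`lam₁ ≥ ⋯ ≥ lam_{de}` which are the top `de` eigenvalues (any eigenvalue of the operator on
the orthogonal complement of the `ψ`'s is no larger), such that
`pᵢ = (⟨qᵢ − q̄, ψ₁⟩, …, ⟨qᵢ − q̄, ψ_{de}⟩)`. -/
def IsPCAEmbedding {μ : Measure α} {n : ℕ} (de : ℕ) (q : Fin n → Lp ℝ 2 μ)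
    (p : Fin n → EuclideanSpace ℝ (Fin de)) : Prop :=
  ∃ (lam : Fin de → ℝ) (ψ : Fin de → Lp ℝ 2 μ),
    Orthonormal ℝ ψ ∧ Antitone lam ∧
    (∀ k, covOp q (ψ k) = lam k • ψ k) ∧
    (∀ (c : ℝ) (v : Lp ℝ 2 μ), ‖v‖ = 1 → covOp q v = c • v →
      (∀ k, ⟪ψ k, v⟫ = 0) → ∀ k, c ≤ lam k) ∧
    ∀ i k, p i k = ⟪q i - qbar q, ψ k⟫

/-!
By Weyl's inequality the `k`-th top eigenvalues of two covariance operators `T` and `S` differ by at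
most `‖T - S‖`, so a top eigenvector of `S` is an approximate eigenvector of `T` for the `k`-th top
eigenvalue of `T`. Since `T` has finite rank, approximate eigenvectors lie close to exact ones, at a
distance proportional to the residual. The Gram–Schmidt process keeps each exact eigenvector in its
eigenspace, as distinct eigenspaces are orthogonal, and moves it little, as the family is close to
an orthonormal one. This gives top eigenvectors of `T` within `O(‖T - S‖)` of those of `S`; when
`‖T - S‖` is not small the bound is trivial, unit vectors being at distance at most `2`.
-/

section Centered

variable {𝕜 V ι : Type*} [DivisionRing 𝕜] [AddCommGroup V] [Module 𝕜 V] [Fintype ι]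

variable (𝕜) in
/-- The family `q` minus its mean. -/
def centered (q : ι → V) (i : ι) : V := q i - (Fintype.card ι : 𝕜)⁻¹ • ∑ j, q j

lemma centered_sub (q r : ι → V) : centered 𝕜 (q - r) = centered 𝕜 q - centered 𝕜 r := by
  ext i
  simp only [centered, Pi.sub_apply, Finset.sum_sub_distrib, smul_sub]
  abel

end Centered

section NormedSpace

lemma norm_sub_le_two {E : Type*} [SeminormedAddCommGroup E] {x y : E} (hx : ‖x‖ = 1)
    (hy : ‖y‖ = 1) : ‖x - y‖ ≤ 2 := by
  calc ‖x - y‖ ≤ ‖x‖ + ‖y‖ := norm_sub_le _ _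
    _ = 2 := by rw [hx, hy, one_add_one_eq_two]

lemma norm_inv_norm_smul_sub_le {𝕜 E : Type*} [RCLike 𝕜] [NormedAddCommGroup E] [NormedSpace 𝕜 E]
    (x : E) {v : E} (hv : ‖v‖ = 1) :
    ‖(‖x‖⁻¹ : 𝕜) • x - v‖ ≤ 2 * ‖x - v‖ := by
  rcases eq_or_ne x 0 with rfl | hx
  · simp [hv]
  have hsmul : (‖x‖⁻¹ : 𝕜) • x - x = ((‖x‖⁻¹ * (1 - ‖x‖) : ℝ) : 𝕜) • x := by
    have hx' : (‖x‖ : 𝕜) ≠ 0 := by simpa using hx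
    rw [← sub_eq_zero]
    push_cast
    rw [mul_sub, mul_one, inv_mul_cancel₀ hx', sub_smul, one_smul, sub_self]
  have hdist : ‖(‖x‖⁻¹ : 𝕜) • x - x‖ = |‖v‖ - ‖x‖| := by
    rw [hsmul, norm_smul, RCLike.norm_ofReal, abs_mul, abs_inv, abs_norm, hv, mul_right_comm,
      inv_mul_cancel₀ (norm_ne_zero_iff.2 hx), one_mul]
  calc ‖(‖x‖⁻¹ : 𝕜) • x - v‖ ≤ ‖(‖x‖⁻¹ : 𝕜) • x - x‖ + ‖x - v‖ :=
        norm_sub_le_norm_sub_add_norm_sub _ _ _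
    _ ≤ ‖x - v‖ + ‖x - v‖ := by
        gcongr
        rw [hdist, norm_sub_rev]
        exact abs_norm_sub_norm_le v x
    _ = 2 * ‖x - v‖ := (two_mul _).symm

lemma sum_norm_mul_norm_le_norm_toLp_mul {ι E : Type*} [Fintype ι] [SeminormedAddCommGroup E]
    (a b : ι → E) :
    ∑ i, ‖a i‖ * ‖b i‖ ≤ ‖WithLp.toLp 2 a‖ * ‖WithLp.toLp 2 b‖ := by
  simp only [PiLp.norm_eq_of_L2]
  exact Real.sum_mul_le_sqrt_mul_sqrt _ _ _

variable {𝕜 E F : Type*} [NontriviallyNormedField 𝕜] [CompleteSpace 𝕜]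
  [NormedAddCommGroup E] [NormedSpace 𝕜 E] [NormedAddCommGroup F] [NormedSpace 𝕜 F]

lemma exists_mem_ker_norm_sub_le (T : E →ₗ[𝕜] F) [FiniteDimensional 𝕜 T.range] :
    ∃ C, 0 ≤ C ∧ ∀ x, ∃ y ∈ T.ker, ‖x - y‖ ≤ C * ‖T x‖ := by
  obtain ⟨S, hS⟩ := T.rangeRestrict.exists_rightInverse_of_surjective T.range_rangeRestrict
  refine ⟨‖S.toContinuousLinearMap‖, norm_nonneg _,
    fun x => ⟨x - S (T.rangeRestrict x), ?_, ?_⟩⟩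
  · have hTS : T (S (T.rangeRestrict x)) = T x :=
      congrArg Subtype.val (LinearMap.congr_fun hS (T.rangeRestrict x))
    rw [LinearMap.mem_ker, map_sub, hTS, sub_self]
  · rw [sub_sub_cancel]
    exact S.toContinuousLinearMap.le_opNorm (T.rangeRestrict x)

lemma exists_apply_eq_smul_norm_sub_le (T : E →L[𝕜] E)
    [FiniteDimensional 𝕜 (T : E →ₗ[𝕜] E).range] (c : 𝕜) :
    ∃ C, 0 ≤ C ∧ ∀ x, ∃ y, T y = c • y ∧ ‖x - y‖ ≤ C * ‖T x - c • x‖ := by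
  rcases eq_or_ne c 0 with rfl | hc
  · obtain ⟨C, hC, hker⟩ := exists_mem_ker_norm_sub_le (T : E →ₗ[𝕜] E)
    refine ⟨C, hC, fun x => ?_⟩
    obtain ⟨y, hy, hxy⟩ := hker x
    exact ⟨y, by simpa using hy, by simpa using hxy⟩
  -- `T - c` need not have finite rank, but `T * (T - c)` does, and `T` maps the kernel of the
  -- latter into the eigenspace of `c`.
  let U : E →ₗ[𝕜] E := (T : E →ₗ[𝕜] E) ∘ₗ ((T : E →ₗ[𝕜] E) - c • LinearMap.id)
  have : FiniteDimensional 𝕜 U.range :=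
    Submodule.finiteDimensional_of_le (LinearMap.range_comp_le_range _ _)
  obtain ⟨C, hC, hker⟩ := exists_mem_ker_norm_sub_le U
  refine ⟨‖c‖⁻¹ * (1 + ‖T‖ * (C * ‖T‖)), by positivity, fun x => ?_⟩
  obtain ⟨y, hy, hxy⟩ := hker x
  have hTy : T (T y) = c • T y := by
    rw [← sub_eq_zero, ← map_smul, ← map_sub]
    exact hy
  refine ⟨c⁻¹ • T y, by rw [map_smul, hTy, smul_comm], ?_⟩
  have hsub : x - c⁻¹ • T y = c⁻¹ • (T (x - y) - (T x - c • x)) := by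
    rw [map_sub, sub_sub_sub_cancel_left, smul_sub, inv_smul_smul₀ hc]
  have hUx : ‖U x‖ ≤ ‖T‖ * ‖T x - c • x‖ := T.le_opNorm _
  calc ‖x - c⁻¹ • T y‖ = ‖c‖⁻¹ * ‖T (x - y) - (T x - c • x)‖ := by
        rw [hsub, norm_smul, norm_inv]
    _ ≤ ‖c‖⁻¹ * (‖T‖ * ‖x - y‖ + ‖T x - c • x‖) := by
        gcongr
        exact (norm_sub_le _ _).trans (by gcongr; exact T.le_opNorm _)
    _ ≤ ‖c‖⁻¹ * (‖T‖ * (C * (‖T‖ * ‖T x - c • x‖)) + ‖T x - c • x‖) := by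
        gcongr
        exact hxy.trans (by gcongr)
    _ = ‖c‖⁻¹ * (1 + ‖T‖ * (C * ‖T‖)) * ‖T x - c • x‖ := by ring

end NormedSpace

section InnerProductSpace

open InnerProductSpace
open scoped InnerProductSpace

variable {𝕜 H : Type*} [RCLike 𝕜] [NormedAddCommGroup H] [InnerProductSpace 𝕜 H]

lemma inner_eq_zero_of_eigenvalue_ne {T : H →ₗ[𝕜] H} (hT : T.IsSymmetric) {c d : 𝕜} {x y : H}
    (hx : T x = c • x) (hy : T y = d • y) (hcd : c ≠ d) : ⟪x, y⟫_𝕜 = 0 :=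
  hT.orthogonalFamily_eigenspaces hcd ⟨x, Module.End.mem_eigenspace_iff.2 hx⟩
    ⟨y, Module.End.mem_eigenspace_iff.2 hy⟩

section GramSchmidt

variable {ι : Type*} [LinearOrder ι] [LocallyFiniteOrderBot ι] [WellFoundedLT ι]

lemma gramSchmidt_eq_sub_sum_gramSchmidtNormed (f : ι → H) (n : ι) :
    gramSchmidt 𝕜 f n = f n - ∑ i ∈ Finset.Iio n,
      ⟪gramSchmidtNormed 𝕜 f i, f n⟫_𝕜 • gramSchmidtNormed 𝕜 f i := by
  rw [gramSchmidt_def]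
  congr! 2 with i
  simp only [Submodule.starProjection_singleton, gramSchmidtNormed, inner_smul_left, smul_smul,
    map_inv₀, RCLike.conj_ofReal]
  congr 1
  push_cast
  ring

lemma apply_gramSchmidtNormed_eq_smul {T : H →ₗ[𝕜] H} (hT : T.IsSymmetric) {c : ι → 𝕜}
    {f : ι → H} (hf : ∀ i, T (f i) = c i • f i) (n : ι) :
    T (gramSchmidtNormed 𝕜 f n) = c n • gramSchmidtNormed 𝕜 f n := by
  induction n using WellFoundedLT.induction with
  | ind n ih =>
    have hcoeff : ∀ i ∈ Finset.Iio n,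
        T (⟪gramSchmidtNormed 𝕜 f i, f n⟫_𝕜 • gramSchmidtNormed 𝕜 f i) =
          c n • ⟪gramSchmidtNormed 𝕜 f i, f n⟫_𝕜 • gramSchmidtNormed 𝕜 f i := by
      intro i hi
      rw [map_smul, ih i (Finset.mem_Iio.1 hi)]
      rcases eq_or_ne (c i) (c n) with hc | hc
      · rw [hc, smul_comm]
      · rw [inner_eq_zero_of_eigenvalue_ne hT (ih i (Finset.mem_Iio.1 hi)) (hf n) hc, zero_smul,
          zero_smul, smul_zero]
    have hgs : T (gramSchmidt 𝕜 f n) = c n • gramSchmidt 𝕜 f n := by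
      rw [gramSchmidt_eq_sub_sum_gramSchmidtNormed, map_sub, map_sum, Finset.sum_congr rfl hcoeff,
        hf, ← Finset.smul_sum, smul_sub]
    rw [gramSchmidtNormed, map_smul, hgs, smul_comm]

lemma norm_gramSchmidtNormed_le_one (f : ι → H) (n : ι) : ‖gramSchmidtNormed 𝕜 f n‖ ≤ 1 := by
  by_cases h : gramSchmidtNormed 𝕜 f n = 0
  · simp [h]
  · exact (gramSchmidtNormed_unit_length' h).le

variable (𝕜 H) in
lemma exists_norm_gramSchmidtNormed_sub_le (n : ι) :
    ∃ C, 0 ≤ C ∧ ∀ (v f : ι → H) (δ : ℝ), Orthonormal 𝕜 v → (∀ i, ‖f i - v i‖ ≤ δ) →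
      ‖gramSchmidtNormed 𝕜 f n - v n‖ ≤ C * δ := by
  induction n using WellFoundedLT.induction with
  | ind n ih =>
    choose! C hC0 hC using ih
    have hsum : 0 ≤ ∑ i ∈ Finset.Iio n, (1 + C i) :=
      Finset.sum_nonneg fun i hi => by linarith [hC0 i (Finset.mem_Iio.1 hi)]
    refine ⟨2 * (1 + ∑ i ∈ Finset.Iio n, (1 + C i)), by linarith, fun v f δ hv hf => ?_⟩
    set u := gramSchmidtNormed 𝕜 f
    have hcoeff : ∀ i ∈ Finset.Iio n, ‖⟪u i, f n⟫_𝕜 • u i‖ ≤ (1 + C i) * δ := by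
      intro i hi
      have hin := Finset.mem_Iio.1 hi
      have hu : ‖u i‖ ≤ 1 := norm_gramSchmidtNormed_le_one f i
      have hsplit : ⟪u i, f n⟫_𝕜 = ⟪u i, f n - v n⟫_𝕜 + ⟪u i - v i, v n⟫_𝕜 := by
        rw [inner_sub_right, inner_sub_left, hv.2 hin.ne, sub_zero, sub_add_cancel]
      calc ‖⟪u i, f n⟫_𝕜 • u i‖ ≤ ‖⟪u i, f n⟫_𝕜‖ := by
            rw [norm_smul]
            exact mul_le_of_le_one_right (norm_nonneg _) hu
        _ ≤ ‖u i‖ * ‖f n - v n‖ + ‖u i - v i‖ * ‖v n‖ := by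
            rw [hsplit]
            exact (norm_add_le _ _).trans (add_le_add (norm_inner_le_norm _ _)
              (norm_inner_le_norm _ _))
        _ ≤ 1 * δ + C i * δ * 1 := by
            gcongr
            · exact hf n
            · exact (norm_nonneg _).trans (hC i hin v f δ hv hf)
            · exact hC i hin v f δ hv hf
            · exact (hv.1 n).le
        _ = (1 + C i) * δ := by ring
    have hgs : ‖gramSchmidt 𝕜 f n - v n‖ ≤ (1 + ∑ i ∈ Finset.Iio n, (1 + C i)) * δ := by
      rw [gramSchmidt_eq_sub_sum_gramSchmidtNormed, sub_right_comm, add_mul, one_mul,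
        Finset.sum_mul]
      exact (norm_sub_le _ _).trans (add_le_add (hf n) (norm_sum_le_of_le _ hcoeff))
    calc ‖u n - v n‖ ≤ 2 * ‖gramSchmidt 𝕜 f n - v n‖ := norm_inv_norm_smul_sub_le _ (hv.1 n)
      _ ≤ 2 * (1 + ∑ i ∈ Finset.Iio n, (1 + C i)) * δ := by
          rw [mul_assoc]
          gcongr

lemma exists_orthonormal_apply_eq_smul_norm_sub_le [Finite ι] (T : H →L[𝕜] H)
    [FiniteDimensional 𝕜 (T : H →ₗ[𝕜] H).range] (hT : (T : H →ₗ[𝕜] H).IsSymmetric)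
    (c : ι → 𝕜) :
    ∃ C, 0 ≤ C ∧ ∀ (v : ι → H) (δ : ℝ), Orthonormal 𝕜 v → (∀ i, ‖T (v i) - c i • v i‖ ≤ δ) →
      C * δ < 1 → ∃ φ : ι → H, Orthonormal 𝕜 φ ∧ (∀ i, T (φ i) = c i • φ i) ∧
        ∀ i, ‖φ i - v i‖ ≤ C * δ := by
  choose D _ hD using fun i => exists_apply_eq_smul_norm_sub_le T (c i)
  choose G _ hG using exists_norm_gramSchmidtNormed_sub_le (ι := ι) 𝕜 H
  obtain ⟨M, hM⟩ := Finite.exists_le D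
  obtain ⟨N, hN⟩ := Finite.exists_le G
  refine ⟨max N 0 * max M 0, by positivity, fun v δ hv hres hsmall => ?_⟩
  choose f hf hfv using fun i => hD i (v i)
  have hfδ (i : ι) : ‖f i - v i‖ ≤ max M 0 * δ := by
    rw [norm_sub_rev]
    have hDM : D i ≤ max M 0 := (hM i).trans (le_max_left _ _)
    exact (hfv i).trans (mul_le_mul hDM (hres i) (norm_nonneg _) (by positivity))
  have hclose (i : ι) : ‖gramSchmidtNormed 𝕜 f i - v i‖ ≤ max N 0 * max M 0 * δ := by
    have hGN : G i ≤ max N 0 := (hN i).trans (le_max_left _ _)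
    rw [mul_assoc]
    exact (hG i v f _ hv hfδ).trans
      (mul_le_mul_of_nonneg_right hGN ((norm_nonneg _).trans (hfδ i)))
  have hne (i : ι) : gramSchmidtNormed 𝕜 f i ≠ 0 := by
    intro h0
    have := hclose i
    rw [h0, zero_sub, norm_neg, hv.1 i] at this
    linarith
  have horth : Orthonormal 𝕜 (gramSchmidtNormed 𝕜 f) :=
    ⟨fun i => gramSchmidtNormed_unit_length' (hne i), fun i j hij =>
      (gramSchmidtNormed_orthonormal' f).2 (i := ⟨i, hne i⟩) (j := ⟨j, hne j⟩)
        (by simpa using hij)⟩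
  exact ⟨_, horth, apply_gramSchmidtNormed_eq_smul hT hf, hclose⟩

end GramSchmidt

lemma exists_mem_norm_eq_one_inner_eq_zero {κ : Type*} [Fintype κ] {W : Submodule 𝕜 H} (e : κ → H)
    (hW : Fintype.card κ < Module.finrank 𝕜 W) :
    ∃ x ∈ W, ‖x‖ = 1 ∧ ∀ k, ⟪e k, x⟫_𝕜 = 0 := by
  have : FiniteDimensional 𝕜 W := FiniteDimensional.of_finrank_pos (by omega)
  let L : W →ₗ[𝕜] κ → 𝕜 := LinearMap.pi fun k => (innerₛₗ 𝕜 (e k)).domRestrict W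
  have hker : L.ker ≠ ⊥ := LinearMap.ker_ne_bot_of_finrank_lt (by simpa using hW)
  obtain ⟨x, hx, hx0⟩ := Submodule.exists_mem_ne_zero_of_ne_bot hker
  have hL (k : κ) : ⟪e k, (x : H)⟫_𝕜 = 0 := congrFun (LinearMap.mem_ker.1 hx) k
  refine ⟨(‖(x : H)‖⁻¹ : 𝕜) • (x : H), W.smul_mem _ x.2,
    norm_smul_inv_norm (by simpa using hx0), fun k => ?_⟩
  rw [inner_smul_right, hL, mul_zero]

lemma mul_norm_sq_le_re_inner_of_mem_span {κ : Type*} [Finite κ] {T : H →ₗ[𝕜] H} {f : κ → H}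
    {lam : κ → ℝ} (hf : Orthonormal 𝕜 f) (hT : ∀ i, T (f i) = (lam i : 𝕜) • f i) {s : ℝ}
    (hs : ∀ i, s ≤ lam i) {x : H} (hx : x ∈ Submodule.span 𝕜 (Set.range f)) :
    s * ‖x‖ ^ 2 ≤ RCLike.re ⟪T x, x⟫_𝕜 := by
  have := Fintype.ofFinite κ
  obtain ⟨a, rfl⟩ := (Submodule.mem_span_range_iff_exists_fun 𝕜).1 hx
  have hnorm : ‖∑ i, a i • f i‖ ^ 2 = ∑ i, ‖a i‖ ^ 2 := by
    rw [← RCLike.ofReal_inj (K := 𝕜), RCLike.ofReal_pow, ← inner_self_eq_norm_sq_to_K,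
      hf.inner_sum]
    simp only [RCLike.conj_mul, RCLike.ofReal_sum, RCLike.ofReal_pow]
  have hinner : RCLike.re ⟪T (∑ i, a i • f i), ∑ i, a i • f i⟫_𝕜 = ∑ i, lam i * ‖a i‖ ^ 2 := by
    simp only [map_sum, map_smul, hT, smul_smul]
    rw [hf.inner_sum, map_sum]
    refine Finset.sum_congr rfl fun i _ => ?_
    rw [map_mul (starRingEnd 𝕜), RCLike.conj_ofReal, mul_right_comm, RCLike.conj_mul, mul_comm,
      RCLike.re_ofReal_mul, ← RCLike.ofReal_pow, RCLike.ofReal_re]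
  rw [hnorm, hinner, Finset.mul_sum]
  exact Finset.sum_le_sum fun i _ => mul_le_mul_of_nonneg_right (hs i) (sq_nonneg _)

lemma re_inner_le_mul_norm_sq_of_mem_span {κ : Type*} [Finite κ] {T : H →ₗ[𝕜] H} {f : κ → H}
    {lam : κ → ℝ} (hf : Orthonormal 𝕜 f) (hT : ∀ i, T (f i) = (lam i : 𝕜) • f i) {s : ℝ}
    (hs : ∀ i, lam i ≤ s) {x : H} (hx : x ∈ Submodule.span 𝕜 (Set.range f)) :
    RCLike.re ⟪T x, x⟫_𝕜 ≤ s * ‖x‖ ^ 2 := by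
  have hneg : -s * ‖x‖ ^ 2 ≤ RCLike.re ⟪(-T) x, x⟫_𝕜 :=
    mul_norm_sq_le_re_inner_of_mem_span (lam := -lam) hf (by simp [hT])
      (fun i => neg_le_neg (hs i)) hx
  rw [LinearMap.neg_apply, inner_neg_left, map_neg, neg_mul] at hneg
  exact neg_le_neg_iff.1 hneg

lemma exists_orthonormal_eigenvectors_span_eq {T : H →ₗ[𝕜] H} (hT : T.IsSymmetric)
    (V : Submodule 𝕜 H) [FiniteDimensional 𝕜 V] (hV : ∀ x ∈ V, T x ∈ V) :
    ∃ (lam : Fin (Module.finrank 𝕜 V) → ℝ) (f : Fin (Module.finrank 𝕜 V) → H),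
      Orthonormal 𝕜 f ∧ Antitone lam ∧ (∀ i, T (f i) = (lam i : 𝕜) • f i) ∧
        Submodule.span 𝕜 (Set.range f) = V := by
  have hTV := hT.restrict_invariant hV
  let b := hTV.eigenvectorBasis rfl
  refine ⟨hTV.eigenvalues rfl, fun i => b i, b.orthonormal.comp_linearIsometry V.subtypeₗᵢ,
    hTV.eigenvalues_antitone rfl,
    fun i => congrArg Subtype.val (hTV.apply_eigenvectorBasis rfl i), ?_⟩
  have hspan : Submodule.span 𝕜 (Set.range b) = ⊤ := by
    rw [← b.coe_toBasis, b.toBasis.span_eq]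
  calc Submodule.span 𝕜 (Set.range fun i => (b i : H))
      = (Submodule.span 𝕜 (Set.range b)).map V.subtype := by
        rw [Submodule.map_span, ← Set.range_comp]
        rfl
    _ = V := by rw [hspan, Submodule.map_top, V.range_subtype]

lemma orthonormal_option_elim {κ : Type*} {f : κ → H} {v : H} (hf : Orthonormal 𝕜 f)
    (hv : ‖v‖ = 1) (hfv : ∀ k, ⟪f k, v⟫_𝕜 = 0) :
    Orthonormal 𝕜 fun o : Option κ => o.elim v f := by
  refine ⟨fun o => ?_, fun o o' hne => ?_⟩
  · cases o with
    | none => exact hv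
    | some k => exact hf.1 k
  · match o, o' with
    | none, none => exact absurd rfl hne
    | none, some k => exact inner_eq_zero_symm.1 (hfv k)
    | some k, none => exact hfv k
    | some k, some l => exact hf.2 (by simpa using hne)

/-- `ψ` is an orthonormal family of eigenvectors of `T` for its `m` largest eigenvalues `μ`, counted
with multiplicity and listed in decreasing order: no eigenvector orthogonal to `ψ` has an eigenvalue
larger than one of the `μ k`. -/
structure IsTopEigensystem {m : ℕ} (T : H →ₗ[𝕜] H) (μ : Fin m → ℝ) (ψ : Fin m → H) : Prop where
  orthonormal : Orthonormal 𝕜 ψ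
  antitone : Antitone μ
  apply_eq (k : Fin m) : T (ψ k) = (μ k : 𝕜) • ψ k
  le_of_orthogonal {c : ℝ} {v : H} : ‖v‖ = 1 → T v = (c : 𝕜) • v → (∀ k, ⟪ψ k, v⟫_𝕜 = 0) →
    ∀ k, c ≤ μ k

namespace IsTopEigensystem

variable {m : ℕ} {T : H →ₗ[𝕜] H} {μ : Fin m → ℝ} {ψ : Fin m → H}

lemma eigenvalue_le (h : IsTopEigensystem T μ ψ) (hT : T.IsSymmetric) {k : Fin m} {c : ℝ} {v : H}
    (hv : ‖v‖ = 1) (hTv : T v = (c : 𝕜) • v) (hperp : ∀ j < k, ⟪ψ j, v⟫_𝕜 = 0) : c ≤ μ k := by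
  by_contra! hc
  refine hc.not_ge (h.le_of_orthogonal hv hTv (fun j => ?_) k)
  rcases lt_or_ge j k with hjk | hkj
  · exact hperp j hjk
  · exact inner_eq_zero_of_eigenvalue_ne hT (h.apply_eq j) hTv
      (RCLike.ofReal_injective.ne ((h.antitone hkj).trans_lt hc).ne)

lemma re_inner_le (h : IsTopEigensystem T μ ψ) (hT : T.IsSymmetric) [FiniteDimensional 𝕜 T.range]
    {k : Fin m} {x : H} (hx : ∀ j < k, ⟪ψ j, x⟫_𝕜 = 0) :
    RCLike.re ⟪T x, x⟫_𝕜 ≤ μ k * ‖x‖ ^ 2 := by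
  let V : Submodule 𝕜 H := (T.range ⊔ 𝕜 ∙ x) ⊓ ⨅ j ∈ Set.Iio k, (innerₛₗ 𝕜 (ψ j)).ker
  have hmemV {y : H} : y ∈ V ↔ y ∈ T.range ⊔ 𝕜 ∙ x ∧ ∀ j < k, ⟪ψ j, y⟫_𝕜 = 0 := by
    simp [V]
  have hV : ∀ y ∈ V, T y ∈ V := by
    intro y hy
    refine hmemV.2 ⟨Submodule.mem_sup_left (T.mem_range_self y), fun j hj => ?_⟩
    rw [← hT, h.apply_eq, inner_smul_left, (hmemV.1 hy).2 j hj, mul_zero]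
  have hxV : x ∈ V :=
    hmemV.2 ⟨Submodule.mem_sup_right (Submodule.mem_span_singleton_self x), hx⟩
  have : FiniteDimensional 𝕜 V := Submodule.finiteDimensional_inf_left _ _
  obtain ⟨lam, f, hf, -, hTf, hspan⟩ := exists_orthonormal_eigenvectors_span_eq hT V hV
  have hfV (i) : f i ∈ V := hspan ▸ Submodule.subset_span (Set.mem_range_self i)
  exact re_inner_le_mul_norm_sq_of_mem_span hf hTf
    (fun i => h.eigenvalue_le hT (hf.1 i) (hTf i) (hmemV.1 (hfV i)).2) (hspan.symm ▸ hxV)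

lemma of_orthonormal_apply_eq (h : IsTopEigensystem T μ ψ) (hT : T.IsSymmetric) {φ : Fin m → H}
    (hφ : Orthonormal 𝕜 φ) (hTφ : ∀ k, T (φ k) = (μ k : 𝕜) • φ k) : IsTopEigensystem T μ φ where
  orthonormal := hφ
  antitone := h.antitone
  apply_eq := hTφ
  le_of_orthogonal := by
    intro c v hv hTv hperp
    -- The eigenspace of `c` contains `v` and the `φ j` with `μ j = c`, which is one dimension more
    -- than the `ψ j` with `μ j = c` span.
    let J := {j // μ j = c}
    let w : Option J → H := fun o => o.elim v fun j => φ j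
    have hw : Orthonormal 𝕜 w :=
      orthonormal_option_elim (hφ.comp _ Subtype.val_injective) hv fun j => hperp j
    have hspan : Submodule.span 𝕜 (Set.range w) ≤ Module.End.eigenspace T (c : 𝕜) := by
      rw [Submodule.span_le, Set.range_subset_iff]
      rintro (_ | j)
      · exact Module.End.mem_eigenspace_iff.2 hTv
      · exact Module.End.mem_eigenspace_iff.2 (j.2 ▸ hTφ j)
    obtain ⟨x, hx, hx1, hψx⟩ := exists_mem_norm_eq_one_inner_eq_zero
      (W := Submodule.span 𝕜 (Set.range w)) (fun j : J => ψ j) (by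
        rw [finrank_span_eq_card hw.linearIndependent, Fintype.card_option]
        exact Nat.lt_succ_self _)
    have hTx : T x = (c : 𝕜) • x := Module.End.mem_eigenspace_iff.1 (hspan hx)
    refine h.le_of_orthogonal hx1 hTx fun k => ?_
    rcases eq_or_ne (μ k) c with hk | hk
    · exact hψx ⟨k, hk⟩
    · exact inner_eq_zero_of_eigenvalue_ne hT (h.apply_eq k) hTx
        (RCLike.ofReal_injective.ne hk)

lemma eigenvalue_le_add_opNorm {T S : H →L[𝕜] H} {μ lam : Fin m → ℝ} {ψ χ : Fin m → H}
    (hT : IsTopEigensystem (T : H →ₗ[𝕜] H) μ ψ) (hS : IsTopEigensystem (S : H →ₗ[𝕜] H) lam χ)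
    (hSsymm : (S : H →ₗ[𝕜] H).IsSymmetric) [FiniteDimensional 𝕜 (S : H →ₗ[𝕜] H).range]
    (k : Fin m) : μ k ≤ lam k + ‖T - S‖ := by
  have hψ : Orthonormal 𝕜 fun j : Set.Iic k => ψ j :=
    hT.orthonormal.comp _ Subtype.val_injective
  obtain ⟨x, hx, hx1, hχx⟩ := exists_mem_norm_eq_one_inner_eq_zero
    (W := Submodule.span 𝕜 (Set.range fun j : Set.Iic k => ψ j)) (fun j : Set.Iio k => χ j) (by
      rw [finrank_span_eq_card hψ.linearIndependent, Fintype.card_Iic, Fintype.card_Iio,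
        Fin.card_Iic, Fin.card_Iio]
      exact Nat.lt_succ_self _)
  calc μ k = μ k * ‖x‖ ^ 2 := by rw [hx1, one_pow, mul_one]
    _ ≤ RCLike.re ⟪T x, x⟫_𝕜 :=
        mul_norm_sq_le_re_inner_of_mem_span hψ (fun j => hT.apply_eq j)
          (fun j => hT.antitone j.2) hx
    _ = RCLike.re ⟪S x, x⟫_𝕜 + RCLike.re ⟪(T - S) x, x⟫_𝕜 := by
        rw [← map_add, ← inner_add_left, sub_apply, add_sub_cancel]
    _ ≤ lam k * ‖x‖ ^ 2 + ‖(T - S) x‖ * ‖x‖ :=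
        add_le_add (hS.re_inner_le hSsymm fun j hj => hχx ⟨j, hj⟩) (re_inner_le_norm _ _)
    _ ≤ lam k + ‖T - S‖ := by
        rw [hx1, one_pow, mul_one, mul_one]
        gcongr
        exact (T - S).unit_le_opNorm x hx1.le

lemma norm_apply_sub_smul_le {T S : H →L[𝕜] H} {μ lam : Fin m → ℝ} {ψ χ : Fin m → H}
    (hT : IsTopEigensystem (T : H →ₗ[𝕜] H) μ ψ) (hS : IsTopEigensystem (S : H →ₗ[𝕜] H) lam χ)
    (hTsymm : (T : H →ₗ[𝕜] H).IsSymmetric) [FiniteDimensional 𝕜 (T : H →ₗ[𝕜] H).range]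
    (hSsymm : (S : H →ₗ[𝕜] H).IsSymmetric) [FiniteDimensional 𝕜 (S : H →ₗ[𝕜] H).range]
    (k : Fin m) : ‖T (χ k) - (μ k : 𝕜) • χ k‖ ≤ 2 * ‖T - S‖ := by
  have hχ : ‖χ k‖ = 1 := hS.orthonormal.1 k
  have hweyl : |lam k - μ k| ≤ ‖T - S‖ := by
    have hle := hT.eigenvalue_le_add_opNorm hS hSsymm k
    have hge := hS.eigenvalue_le_add_opNorm hT hTsymm k
    rw [norm_sub_rev] at hge
    exact abs_le.2 ⟨by linarith, by linarith⟩
  have hSχ : S (χ k) = (lam k : 𝕜) • χ k := hS.apply_eq k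
  have hsplit : T (χ k) - (μ k : 𝕜) • χ k = (T - S) (χ k) + ((lam k - μ k : ℝ) : 𝕜) • χ k := by
    rw [sub_apply, hSχ, RCLike.ofReal_sub, sub_smul, sub_add_sub_cancel]
  calc ‖T (χ k) - (μ k : 𝕜) • χ k‖ ≤ ‖(T - S) (χ k)‖ + ‖((lam k - μ k : ℝ) : 𝕜) • χ k‖ :=
        hsplit ▸ norm_add_le _ _
    _ ≤ ‖T - S‖ + ‖T - S‖ := by
        rw [norm_smul, RCLike.norm_ofReal, hχ, mul_one]
        exact add_le_add ((T - S).unit_le_opNorm _ hχ.le) hweyl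
    _ = 2 * ‖T - S‖ := (two_mul _).symm

end IsTopEigensystem

lemma exists_isTopEigensystem {m : ℕ} {T : H →ₗ[𝕜] H} (hT : T.IsPositive)
    [FiniteDimensional 𝕜 T.range] {ψ : Fin m → H} (hψ : Orthonormal 𝕜 ψ) :
    ∃ (μ : Fin m → ℝ) (φ : Fin m → H), IsTopEigensystem T μ φ := by
  let V : Submodule 𝕜 H := T.range ⊔ Submodule.span 𝕜 (Set.range ψ)
  have : FiniteDimensional 𝕜 (Submodule.span 𝕜 (Set.range ψ)) :=
    .span_of_finite 𝕜 (Set.finite_range ψ)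
  have : FiniteDimensional 𝕜 V := Submodule.finiteDimensional_sup _ _
  have hTmem (x : H) : T x ∈ V := Submodule.mem_sup_left (T.mem_range_self x)
  obtain ⟨lam, f, hf, hlam, hTf, hspan⟩ :=
    exists_orthonormal_eigenvectors_span_eq hT.isSymmetric V fun x _ => hTmem x
  have hm : m ≤ Module.finrank 𝕜 V := by
    have hψm := finrank_span_eq_card hψ.linearIndependent
    rw [Fintype.card_fin] at hψm
    exact hψm ▸ Submodule.finrank_mono le_sup_right
  have hlam0 (i) : 0 ≤ lam i := by
    have h0 := hT.re_inner_nonneg_left (f i)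
    rwa [hTf, inner_smul_left, RCLike.conj_ofReal, RCLike.re_ofReal_mul,
      inner_self_eq_norm_sq, hf.1, one_pow, mul_one] at h0
  refine ⟨lam ∘ Fin.castLE hm, f ∘ Fin.castLE hm,
    ⟨hf.comp _ (Fin.castLE_injective hm), hlam.comp_monotone (Fin.strictMono_castLE hm).monotone,
      fun k => hTf _, ?_⟩⟩
  intro c v hv hTv hperp k
  by_contra! hc
  have hc0 : (c : 𝕜) ≠ 0 := RCLike.ofReal_ne_zero.2 ((hlam0 _).trans_lt hc).ne'
  have hvV : v ∈ Submodule.span 𝕜 (Set.range f) := by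
    rw [hspan, ← inv_smul_smul₀ hc0 v, ← hTv]
    exact V.smul_mem _ (hTmem v)
  have hfv (i) : ⟪v, f i⟫_𝕜 = 0 := by
    rw [inner_eq_zero_symm]
    rcases lt_or_ge i (Fin.castLE hm k) with hik | hki
    · exact hperp ⟨i, (Fin.lt_def.1 hik).trans k.2⟩
    · exact inner_eq_zero_of_eigenvalue_ne hT.isSymmetric (hTf i) hTv
        (RCLike.ofReal_injective.ne ((hlam hki).trans_lt hc).ne)
  have hvv : ⟪v, v⟫_𝕜 = 0 := by
    have hle : Submodule.span 𝕜 (Set.range f) ≤ (innerₛₗ 𝕜 v).ker :=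
      Submodule.span_le.2 (Set.range_subset_iff.2 hfv)
    exact hle hvV
  rw [inner_self_eq_zero.1 hvv, norm_zero] at hv
  exact zero_ne_one hv

lemma exists_isTopEigensystem_norm_sub_le_mul_opNorm {T : H →L[𝕜] H}
    (hT : T.IsPositive) [FiniteDimensional 𝕜 (T : H →ₗ[𝕜] H).range] (m : ℕ) :
    ∃ C, 0 ≤ C ∧ ∀ (S : H →L[𝕜] H) (lam : Fin m → ℝ) (χ : Fin m → H),
      (S : H →ₗ[𝕜] H).IsSymmetric → FiniteDimensional 𝕜 (S : H →ₗ[𝕜] H).range →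
      IsTopEigensystem (S : H →ₗ[𝕜] H) lam χ →
      ∃ (μ : Fin m → ℝ) (φ : Fin m → H), IsTopEigensystem (T : H →ₗ[𝕜] H) μ φ ∧
        ∀ k, ‖φ k - χ k‖ ≤ C * ‖T - S‖ := by
  by_cases hex : ∃ ψ : Fin m → H, Orthonormal 𝕜 ψ
  swap
  · exact ⟨0, le_rfl, fun S lam χ _ _ hχ => (hex ⟨χ, hχ.orthonormal⟩).elim⟩
  obtain ⟨ψ₀, hψ₀⟩ := hex
  obtain ⟨μ, ψ, hψ⟩ := exists_isTopEigensystem (T.isPositive_toLinearMap_iff.2 hT) hψ₀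
  obtain ⟨C, hC0, hC⟩ :=
    exists_orthonormal_apply_eq_smul_norm_sub_le T hT.isSymmetric fun k => (μ k : 𝕜)
  refine ⟨4 * C, by positivity, fun S lam χ hSsymm hSfin hχ => ?_⟩
  rcases lt_or_ge (C * (2 * ‖T - S‖)) 1 with hsmall | hlarge
  · obtain ⟨φ, hφ, hTφ, hdist⟩ := hC χ (2 * ‖T - S‖) hχ.orthonormal
      (hψ.norm_apply_sub_smul_le hχ hT.isSymmetric hSsymm) hsmall
    refine ⟨μ, φ, hψ.of_orthonormal_apply_eq hT.isSymmetric hφ hTφ, fun k => (hdist k).trans ?_⟩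
    have : 0 ≤ C * ‖T - S‖ := by positivity
    linarith
  · refine ⟨μ, ψ, hψ, fun k => ?_⟩
    calc ‖ψ k - χ k‖ ≤ 2 := norm_sub_le_two (hψ.orthonormal.1 k) (hχ.orthonormal.1 k)
      _ ≤ 4 * C * ‖T - S‖ := by linarith

section Covariance

variable {ι : Type*} [Fintype ι]

variable (𝕜) in
/-- The (uncentered, unnormalized) covariance operator `∑ i, ⟪a i, ·⟫ • a i` of a finite family. -/
def covariance (a : ι → H) : H →L[𝕜] H := ∑ i, rankOne 𝕜 (a i) (a i)

lemma isPositive_covariance (a : ι → H) : (covariance 𝕜 a).IsPositive :=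
  ContinuousLinearMap.isPositive_sum _ fun i _ => isPositive_rankOne_self (a i)

lemma covariance_apply (a : ι → H) (x : H) : covariance 𝕜 a x = ∑ i, ⟪a i, x⟫_𝕜 • a i := by
  simp only [covariance, sum_apply, rankOne_apply]

instance finiteDimensional_range_covariance (a : ι → H) :
    FiniteDimensional 𝕜 (covariance 𝕜 a : H →ₗ[𝕜] H).range := by
  have : FiniteDimensional 𝕜 (Submodule.span 𝕜 (Set.range a)) :=
    .span_of_finite 𝕜 (Set.finite_range a)
  refine Submodule.finiteDimensional_of_le (S₂ := Submodule.span 𝕜 (Set.range a)) ?_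
  rintro _ ⟨x, rfl⟩
  rw [ContinuousLinearMap.coe_coe, covariance_apply]
  exact Submodule.sum_smul_mem _ _ fun i _ => Submodule.subset_span (Set.mem_range_self i)

lemma norm_covariance_sub_le (a b : ι → H) :
    ‖covariance 𝕜 a - covariance 𝕜 b‖ ≤
      ‖WithLp.toLp 2 (a - b)‖ * (‖WithLp.toLp 2 a‖ + ‖WithLp.toLp 2 b‖) := by
  have hterm (i : ι) : rankOne 𝕜 (a i) (a i) - rankOne 𝕜 (b i) (b i) =
      rankOne 𝕜 (a i - b i) (a i) + rankOne 𝕜 (b i) (a i - b i) := by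
    rw [map_sub, map_sub, sub_apply, sub_add_sub_cancel]
  calc ‖covariance 𝕜 a - covariance 𝕜 b‖
      ≤ ∑ i, (‖(a - b) i‖ * ‖a i‖ + ‖b i‖ * ‖(a - b) i‖) := by
        rw [covariance, covariance, ← Finset.sum_sub_distrib]
        refine norm_sum_le_of_le _ fun i _ => ?_
        rw [hterm]
        exact (norm_add_le _ _).trans_eq (by rw [norm_rankOne, norm_rankOne, Pi.sub_apply])
    _ ≤ ‖WithLp.toLp 2 (a - b)‖ * ‖WithLp.toLp 2 a‖ +
          ‖WithLp.toLp 2 b‖ * ‖WithLp.toLp 2 (a - b)‖ := by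
        rw [Finset.sum_add_distrib]
        exact add_le_add (sum_norm_mul_norm_le_norm_toLp_mul _ _)
          (sum_norm_mul_norm_le_norm_toLp_mul _ _)
    _ = ‖WithLp.toLp 2 (a - b)‖ * (‖WithLp.toLp 2 a‖ + ‖WithLp.toLp 2 b‖) := by ring

lemma exists_isTopEigensystem_covariance_norm_sub_le (a : ι → H) (m : ℕ) :
    ∃ C, ∀ (b : ι → H) (lam : Fin m → ℝ) (χ : Fin m → H),
      IsTopEigensystem (covariance 𝕜 b : H →ₗ[𝕜] H) lam χ →
      ∃ (μ : Fin m → ℝ) (φ : Fin m → H), IsTopEigensystem (covariance 𝕜 a : H →ₗ[𝕜] H) μ φ ∧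
        ∀ k, ‖φ k - χ k‖ ≤ C * ‖WithLp.toLp 2 (a - b)‖ := by
  obtain ⟨C, hC0, hC⟩ :=
    exists_isTopEigensystem_norm_sub_le_mul_opNorm (isPositive_covariance (𝕜 := 𝕜) a) m
  set M := ‖WithLp.toLp 2 a‖
  refine ⟨C * (2 * M + 1) + 2, fun b lam χ hχ => ?_⟩
  obtain ⟨μ, φ, hφ, hdist⟩ := hC (covariance 𝕜 b) lam χ (isPositive_covariance b).isSymmetric
    inferInstance hχ
  refine ⟨μ, φ, hφ, fun k => ?_⟩
  set ε := ‖WithLp.toLp 2 (a - b)‖ with hε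
  rcases le_total ε 1 with hsmall | hlarge
  · have hb : ‖WithLp.toLp 2 b‖ ≤ M + 1 := by
      have := norm_le_norm_add_norm_sub (WithLp.toLp 2 a) (WithLp.toLp 2 b)
      rw [← WithLp.toLp_sub, ← hε] at this
      linarith
    calc ‖φ k - χ k‖ ≤ C * (ε * (M + ‖WithLp.toLp 2 b‖)) :=
          (hdist k).trans (by gcongr; exact norm_covariance_sub_le a b)
      _ ≤ C * (ε * (M + (M + 1))) := by gcongr
      _ = (C * (2 * M + 1) + 2) * ε - 2 * ε := by ring
      _ ≤ (C * (2 * M + 1) + 2) * ε := sub_le_self _ (by positivity)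
  · calc ‖φ k - χ k‖ ≤ 2 * 1 := by
          rw [mul_one]
          exact norm_sub_le_two (hφ.orthonormal.1 k) (hχ.orthonormal.1 k)
      _ ≤ (C * (2 * M + 1) + 2) * ε := by
          gcongr
          exact le_add_of_nonneg_left (by positivity)

end Covariance

section Embedding

variable {ι : Type*} [Fintype ι]

lemma sum_norm_centered_sq_le (q : ι → H) : ∑ i, ‖centered 𝕜 q i‖ ^ 2 ≤ ∑ i, ‖q i‖ ^ 2 := by
  rcases isEmpty_or_nonempty ι with _ | _
  · simp only [Finset.univ_eq_empty, Finset.sum_empty, le_refl]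
  set mean := (Fintype.card ι : 𝕜)⁻¹ • ∑ j, q j with hmean
  have hsum : ∑ i, q i = (Fintype.card ι : 𝕜) • mean := by
    rw [hmean, smul_inv_smul₀ (Nat.cast_ne_zero.2 Fintype.card_ne_zero)]
  have hcross : ∑ i, RCLike.re ⟪q i, mean⟫_𝕜 = Fintype.card ι * ‖mean‖ ^ 2 := by
    rw [← map_sum, ← sum_inner, hsum, inner_smul_left, map_natCast, ← RCLike.ofReal_natCast,
      RCLike.re_ofReal_mul, inner_self_eq_norm_sq]
  calc ∑ i, ‖centered 𝕜 q i‖ ^ 2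
      = ∑ i, (‖q i‖ ^ 2 - 2 * RCLike.re ⟪q i, mean⟫_𝕜 + ‖mean‖ ^ 2) :=
        Finset.sum_congr rfl fun i _ => norm_sub_sq (q i) mean
    _ = ∑ i, ‖q i‖ ^ 2 - Fintype.card ι * ‖mean‖ ^ 2 := by
        rw [Finset.sum_add_distrib, Finset.sum_sub_distrib, ← Finset.mul_sum, hcross,
          Finset.sum_const, Finset.card_univ, nsmul_eq_mul]
        ring
    _ ≤ ∑ i, ‖q i‖ ^ 2 := sub_le_self _ (by positivity)

variable (𝕜) in
/-- `p` is a principal component embedding of `q` in dimension `m`: its coordinates are the inner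
products of the centered family with some choice of top eigenvectors of its covariance operator. -/
def IsPrincipalEmbedding {m : ℕ} (q : ι → H) (p : ι → EuclideanSpace 𝕜 (Fin m)) : Prop :=
  ∃ (μ : Fin m → ℝ) (ψ : Fin m → H),
    IsTopEigensystem (covariance 𝕜 (centered 𝕜 q) : H →ₗ[𝕜] H) μ ψ ∧
      ∀ i k, p i k = ⟪centered 𝕜 q i, ψ k⟫_𝕜

lemma norm_inner_sub_inner_sq_le (a b x : H) {y : H} (hy : ‖y‖ = 1) :
    ‖⟪a, x⟫_𝕜 - ⟪b, y⟫_𝕜‖ ^ 2 ≤ 2 * (‖a‖ ^ 2 * ‖x - y‖ ^ 2 + ‖a - b‖ ^ 2) := by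
  have hsplit : ⟪a, x⟫_𝕜 - ⟪b, y⟫_𝕜 = ⟪a, x - y⟫_𝕜 + ⟪a - b, y⟫_𝕜 := by
    rw [inner_sub_right, inner_sub_left, sub_add_sub_cancel]
  calc ‖⟪a, x⟫_𝕜 - ⟪b, y⟫_𝕜‖ ^ 2 ≤ (‖a‖ * ‖x - y‖ + ‖a - b‖ * ‖y‖) ^ 2 := by
        rw [hsplit]
        gcongr
        exact (norm_add_le _ _).trans
          (add_le_add (norm_inner_le_norm _ _) (norm_inner_le_norm _ _))
    _ ≤ 2 * ((‖a‖ * ‖x - y‖) ^ 2 + (‖a - b‖ * ‖y‖) ^ 2) := add_sq_le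
    _ = 2 * (‖a‖ ^ 2 * ‖x - y‖ ^ 2 + ‖a - b‖ ^ 2) := by rw [hy, mul_one, mul_pow]

lemma sum_norm_sub_sq_le_of_inner {m : ℕ} {a b : ι → H} {φ χ : Fin m → H}
    {p r : ι → EuclideanSpace 𝕜 (Fin m)} (hp : ∀ i k, p i k = ⟪a i, φ k⟫_𝕜)
    (hr : ∀ i k, r i k = ⟪b i, χ k⟫_𝕜) (hχ : ∀ k, ‖χ k‖ = 1) {δ : ℝ}
    (hδ : ∀ k, ‖φ k - χ k‖ ≤ δ) :
    ∑ i, ‖p i - r i‖ ^ 2 ≤ 2 * m * ((∑ i, ‖a i‖ ^ 2) * δ ^ 2 + ∑ i, ‖a i - b i‖ ^ 2) := by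
  have hcoord (i : ι) (k : Fin m) :
      ‖(p i - r i) k‖ ^ 2 ≤ 2 * (‖a i‖ ^ 2 * δ ^ 2 + ‖a i - b i‖ ^ 2) := by
    rw [PiLp.sub_apply, hp, hr]
    exact (norm_inner_sub_inner_sq_le _ _ _ (hχ k)).trans (by gcongr; exact hδ k)
  calc ∑ i, ‖p i - r i‖ ^ 2 ≤ ∑ i, ∑ _k : Fin m, 2 * (‖a i‖ ^ 2 * δ ^ 2 + ‖a i - b i‖ ^ 2) := by
        refine Finset.sum_le_sum fun i _ => ?_
        rw [EuclideanSpace.norm_sq_eq]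
        exact Finset.sum_le_sum fun k _ => hcoord i k
    _ = 2 * m * ((∑ i, ‖a i‖ ^ 2) * δ ^ 2 + ∑ i, ‖a i - b i‖ ^ 2) := by
        simp only [Finset.sum_const, Finset.card_univ, Fintype.card_fin, nsmul_eq_mul,
          ← Finset.mul_sum, Finset.sum_add_distrib, ← Finset.sum_mul]
        ring

theorem stmt1_general (q : ι → H) (m : ℕ) :
    ∃ C > (0 : ℝ), ∀ (qh : ι → H) (ph : ι → EuclideanSpace 𝕜 (Fin m)),
      IsPrincipalEmbedding 𝕜 qh ph →
      ∃ pt : ι → EuclideanSpace 𝕜 (Fin m), IsPrincipalEmbedding 𝕜 q pt ∧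
        ∑ i, ‖pt i - ph i‖ ^ 2 ≤ C * ∑ i, ‖q i - qh i‖ ^ 2 := by
  obtain ⟨C, hC⟩ := exists_isTopEigensystem_covariance_norm_sub_le (𝕜 := 𝕜) (centered 𝕜 q) m
  set V := ∑ i, ‖centered 𝕜 q i‖ ^ 2
  refine ⟨2 * m * (V * C ^ 2 + 1) + 1, by positivity, fun qh ph ⟨lam, χ, hχ, hph⟩ => ?_⟩
  obtain ⟨μ, φ, hφ, hdist⟩ := hC _ lam χ hχ
  let pt (i : ι) : EuclideanSpace 𝕜 (Fin m) := WithLp.toLp 2 fun k => ⟪centered 𝕜 q i, φ k⟫_𝕜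
  refine ⟨pt, ⟨μ, φ, hφ, fun _ _ => rfl⟩, ?_⟩
  set ε := ∑ i, ‖centered 𝕜 q i - centered 𝕜 qh i‖ ^ 2
  have hnorm : ‖WithLp.toLp 2 (centered 𝕜 q - centered 𝕜 qh)‖ ^ 2 = ε := PiLp.norm_sq_eq_of_L2 _ _
  have hεle : ε ≤ ∑ i, ‖q i - qh i‖ ^ 2 := by
    have hle := sum_norm_centered_sq_le (𝕜 := 𝕜) (q - qh)
    rwa [centered_sub] at hle
  calc ∑ i, ‖pt i - ph i‖ ^ 2
      ≤ 2 * m * (V * (C * ‖WithLp.toLp 2 (centered 𝕜 q - centered 𝕜 qh)‖) ^ 2 + ε) :=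
        sum_norm_sub_sq_le_of_inner (fun _ _ => rfl) hph hχ.orthonormal.1 hdist
    _ = 2 * m * (V * C ^ 2 + 1) * ε := by rw [mul_pow, hnorm]; ring
    _ ≤ (2 * m * (V * C ^ 2 + 1) + 1) * ∑ i, ‖q i - qh i‖ ^ 2 := by
        gcongr
        exact le_add_of_nonneg_right zero_le_one

end Embedding

end InnerProductSpace

lemma mul_sum_le_mul_card_mul_sum_mul_one_add_sum {ι : Type*} [Fintype ι] {f : ι → ℝ}
    (hf : ∀ i, 0 ≤ f i) {C : ℝ} (hC : 0 ≤ C) :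
    C * ∑ i, f i ≤ C * Fintype.card ι * (∑ i, f i) * (1 + ∑ i, f i) := by
  rcases isEmpty_or_nonempty ι with _ | _
  · simp
  have hsum : 0 ≤ ∑ i, f i := Finset.sum_nonneg fun i _ => hf i
  have hcard : (1 : ℝ) ≤ Fintype.card ι := Nat.one_le_cast.2 Fintype.card_pos
  calc C * ∑ i, f i ≤ C * Fintype.card ι * ∑ i, f i := by
        gcongr
        exact le_mul_of_one_le_right hC hcard
    _ ≤ C * Fintype.card ι * (∑ i, f i) * (1 + ∑ i, f i) :=
        le_mul_of_one_le_right (by positivity) (le_add_of_nonneg_right hsum)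

lemma isPCAEmbedding_iff_isPrincipalEmbedding {μ : Measure α} {n de : ℕ} {q : Fin n → Lp ℝ 2 μ}
    {p : Fin n → EuclideanSpace ℝ (Fin de)} :
    IsPCAEmbedding de q p ↔ IsPrincipalEmbedding ℝ q p := by
  have hcentered (i : Fin n) : centered ℝ q i = q i - qbar q := by
    rw [centered, qbar, Fintype.card_fin]
  have hcov (g : Lp ℝ 2 μ) : covariance ℝ (centered ℝ q) g = covOp q g := by
    simp only [covariance_apply, hcentered, covOp]
  constructor
  · rintro ⟨lam, ψ, horth, hanti, heig, htop, hp⟩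
    exact ⟨lam, ψ, ⟨horth, hanti, fun k => (hcov _).trans (heig k),
      fun hv hKv => htop _ _ hv ((hcov _).symm.trans hKv)⟩,
      fun i k => (hp i k).trans (by rw [hcentered])⟩
  · rintro ⟨lam, ψ, hψ, hp⟩
    exact ⟨lam, ψ, hψ.orthonormal, hψ.antitone, fun k => (hcov _).symm.trans (hψ.apply_eq k),
      fun c v hv hKv => hψ.le_of_orthogonal hv ((hcov _).trans hKv),
      fun i k => (hp i k).trans (by rw [hcentered])⟩

theorem stmt1 (μ : Measure α) [SigmaFinite μ] (n : ℕ) (q : Fin n → Lp ℝ 2 μ)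
    (de : ℕ) (hde : 1 ≤ de) :
    ∃ C > (0 : ℝ), ∀ (qh : Fin n → Lp ℝ 2 μ) (ph : Fin n → EuclideanSpace ℝ (Fin de)),
      IsPCAEmbedding de qh ph →
      ∃ pt : Fin n → EuclideanSpace ℝ (Fin de), IsPCAEmbedding de q pt ∧
        ∑ i, ‖pt i - ph i‖ ^ 2 ≤
          C * n * (∑ i, ‖q i - qh i‖ ^ 2) * (1 + ∑ i, ‖q i - qh i‖ ^ 2) := by
  obtain ⟨C, hC0, hC⟩ := stmt1_general (𝕜 := ℝ) q de
  simp only [isPCAEmbedding_iff_isPrincipalEmbedding]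
  refine ⟨C, hC0, fun qh ph hph => (hC qh ph hph).imp fun pt hpt => ⟨hpt.1, hpt.2.trans ?_⟩⟩
  simpa only [Fintype.card_fin] using
    mul_sum_le_mul_card_mul_sum_mul_one_add_sum (fun i => sq_nonneg ‖q i - qh i‖) hC0.le

end Stmt1
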